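/- Dilworth's theorem: a finite partially ordered set P can be partitioned into m chains if and only if every antichain in P has cardinality at most m; equivalently the minimum number of chains in a chain partition equals the maximum cardinality of an antichain. -/

import Mathlib

/-!
Galvin's induction: a finite set has a chain cover `c` together with an antichain consisting of one
element from each chain. Remove a maximal element `a`, take `c` for the rest, and let `x` be the
highest antichain transversal of `c`. If no `x i` lies below `a`, then `{a}` is a new chain and `a`
extends `x`. If `x i ≤ a`, then `{a} ∪ {z ∈ c i | z ≤ x i}` is a chain meeting every transversal of
`c`, so removing it lowers the width.

Compactness then gives infinite orders of finite width.
-/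

section

open Set

variable {P ι κ : Type*} [Preorder P] {S K : Set P} {c : ι → Set P}

/-- A family of elements with distinct indices incomparable: an antichain listed without
repetition. Stating this for families rather than sets lets antichains be matched with chains
index by index. -/
def IsAntichainFamily (x : ι → P) : Prop :=
  ∀ ⦃i j⦄, x i ≤ x j → i = j

/-- The families `c` of chains with union `S`. The chains may overlap or be empty, so this is a
chain partition only after choosing one chain for each element of `S`. -/
structure IsChainCover (S : Set P) (c : ι → Set P) : Prop where
  isChain : ∀ i, IsChain (· ≤ ·) (c i)
  iUnion_eq : ⋃ i, c i = S

/-- The antichains that consist of one element `x i` from each set `c i`, as a subset of the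
product order `ι → P`. -/
def antichainTransversals (c : ι → Set P) : Set (ι → P) :=
  {x | (∀ i, x i ∈ c i) ∧ IsAntichainFamily x}

/-- A chain cover with an antichain transversal: the transversal witnesses that no cover has
fewer chains. -/
def HasTightChainCover (S : Set P) : Prop :=
  ∃ (n : ℕ) (c : Fin n → Set P), IsChainCover S c ∧ (antichainTransversals c).Nonempty

theorem IsAntichainFamily.injective {x : ι → P} (hx : IsAntichainFamily x) :
    Function.Injective x :=
  fun _ _ hij => hx hij.le

theorem IsAntichainFamily.isAntichain_range {x : ι → P} (hx : IsAntichainFamily x) :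
    IsAntichain (· ≤ ·) (range x) := by
  rintro _ ⟨i, rfl⟩ _ ⟨j, rfl⟩ hne hle
  exact hne (congrArg x (hx hle))

theorem IsAntichainFamily.cons {n : ℕ} {x : Fin n → P} {a : P} (hx : IsAntichainFamily x)
    (hax : ∀ i, ¬ a ≤ x i) (hxa : ∀ i, ¬ x i ≤ a) :
    IsAntichainFamily (Fin.cons a x : Fin (n + 1) → P) := by
  intro i j
  cases i using Fin.cases <;> cases j using Fin.cases
  · exact fun _ => rfl
  · exact fun h => absurd h (hax _)
  · exact fun h => absurd h (hxa _)
  · exact fun h => congrArg Fin.succ (hx h)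

theorem IsChainCover.mem_iff (hc : IsChainCover S c) {p : P} : p ∈ S ↔ ∃ i, p ∈ c i := by
  rw [← hc.iUnion_eq, mem_iUnion]

theorem IsChainCover.exists_embedding (hc : IsChainCover S c) {y : κ → P}
    (hy : IsAntichainFamily y) (hyS : ∀ k, y k ∈ S) :
    ∃ φ : κ ↪ ι, ∀ k, y k ∈ c (φ k) := by
  choose φ hφ using fun k => hc.mem_iff.1 (hyS k)
  refine ⟨⟨φ, fun k l hkl => ?_⟩, hφ⟩
  rcases (hc.isChain (φ k)).total (hφ k) (hkl ▸ hφ l) with h | h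
  exacts [hy h, (hy h).symm]

theorem IsChainCover.exists_mem_antichainTransversals_of_card_le [Fintype ι] [Fintype κ]
    (hc : IsChainCover S c) {y : κ → P} (hy : IsAntichainFamily y) (hyS : ∀ k, y k ∈ S)
    (hcard : Fintype.card ι ≤ Fintype.card κ) :
    ∃ x ∈ antichainTransversals c, ∀ i, x i ∈ range y := by
  obtain ⟨φ, hφ⟩ := hc.exists_embedding hy hyS
  let e : κ ≃ ι := Equiv.ofBijective φ (φ.injective.bijective_of_nat_card_le (by simpa using hcard))
  refine ⟨y ∘ e.symm, ⟨fun i => ?_, fun i j hij => e.symm.injective (hy hij)⟩,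
    fun i => mem_range_self _⟩
  have hi := hφ (e.symm i)
  rwa [show φ (e.symm i) = i from e.apply_symm_apply i] at hi

theorem exists_isGreatest_antichainTransversals (hchain : ∀ i, IsChain (· ≤ ·) (c i))
    (hfin : ∀ i, (c i).Finite) (hne : (antichainTransversals c).Nonempty) :
    ∃ x, IsGreatest (antichainTransversals c) x := by
  have exists_top : ∀ i, ∃ y ∈ antichainTransversals c,
      ∀ z ∈ antichainTransversals c, z i ≤ y i := by
    intro i
    have hsub : Function.eval i '' antichainTransversals c ⊆ c i := by
      rintro _ ⟨y, hy, rfl⟩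
      exact hy.1 i
    obtain ⟨_, ⟨y, hy, rfl⟩, hmax⟩ := ((hfin i).subset hsub).exists_maximal (hne.image _)
    refine ⟨y, hy, fun z hz => ?_⟩
    exact ((hchain i).total (hz.1 i) (hy.1 i)).elim id (hmax (mem_image_of_mem _ hz))
  choose y hy hle using exists_top
  refine ⟨fun i => y i i, ⟨fun i => (hy i).1 i, fun i j hij => (hy j).2 ?_⟩,
    fun z hz i => hle i z hz⟩
  exact (hle i (y j) (hy j)).trans hij

theorem IsChainCover.cons {n : ℕ} {c : Fin n → Set P} (hc : IsChainCover S c)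
    (hK : IsChain (· ≤ ·) K) : IsChainCover (K ∪ S) (Fin.cons K c : Fin (n + 1) → Set P) where
  isChain := Fin.cases hK hc.isChain
  iUnion_eq := by
    ext p
    simp only [mem_iUnion, Fin.exists_fin_succ, Fin.cons_zero, Fin.cons_succ, mem_union, hc.mem_iff]

theorem hasTightChainCover_empty : HasTightChainCover (∅ : Set P) :=
  ⟨0, Fin.elim0, ⟨fun i => i.elim0, iUnion_of_empty _⟩,
    Fin.elim0, fun i => i.elim0, fun i => i.elim0⟩

theorem IsChainCover.hasTightChainCover_insert {n : ℕ} {c : Fin n → Set P}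
    (hc : IsChainCover S c) {x : Fin n → P} (hx : x ∈ antichainTransversals c) {a : P}
    (hax : ∀ i, ¬ a ≤ x i) (hxa : ∀ i, ¬ x i ≤ a) : HasTightChainCover (insert a S) :=
  ⟨n + 1, Fin.cons {a} c, hc.cons IsChain.singleton,
    Fin.cons a x, Fin.cases (mem_singleton a) hx.1, hx.2.cons hax hxa⟩

theorem isChain_insert_inter_Iic {C : Set P} (hC : IsChain (· ≤ ·) C) {a b : P} (hba : b ≤ a) :
    IsChain (· ≤ ·) (insert a (C ∩ Iic b)) :=
  (hC.mono inter_subset_left).insert fun _ hz _ => Or.inr (hz.2.trans hba)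

theorem IsChainCover.hasTightChainCover_union {n : ℕ} {c : Fin n → Set P}
    (hc : IsChainCover S c) (hne : (antichainTransversals c).Nonempty)
    (hK : IsChain (· ≤ ·) K) (hmeet : ∀ x ∈ antichainTransversals c, ∃ i, x i ∈ K)
    (hdiff : HasTightChainCover (S \ K)) : HasTightChainCover (K ∪ S) := by
  obtain ⟨m, d, hd, y, hyd, hy⟩ := hdiff
  have hyS : ∀ k, y k ∈ S \ K := fun k => hd.mem_iff.2 ⟨k, hyd k⟩
  have hmn : m < n := by
    by_contra! hnm
    obtain ⟨z, hz, hzy⟩ := hc.exists_mem_antichainTransversals_of_card_le hy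
      (fun k => (hyS k).1) (by simpa)
    obtain ⟨i, hi⟩ := hmeet z hz
    obtain ⟨k, hk⟩ := hzy i
    exact (hyS k).2 (hk ▸ hi)
  have hcover : IsChainCover (K ∪ S) (Fin.cons K d : Fin (m + 1) → Set P) := by
    simpa only [union_sdiff_self] using hd.cons hK
  obtain ⟨x, hxc, hx⟩ := hne
  obtain ⟨z, hz, -⟩ := hcover.exists_mem_antichainTransversals_of_card_le hx
    (fun i => Or.inr (hc.mem_iff.2 ⟨i, hxc i⟩)) (by simpa)
  exact ⟨m + 1, _, hcover, z, hz⟩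

theorem hasTightChainCover_of_finite (hS : S.Finite) : HasTightChainCover S := by
  induction hcard : S.ncard using Nat.strong_induction_on generalizing S with | _ _ ih
  subst hcard
  have of_ssubset : ∀ T ⊂ S, HasTightChainCover T := fun T hT =>
    ih _ (ncard_lt_ncard hT hS) (hS.subset hT.subset) rfl
  rcases S.eq_empty_or_nonempty with rfl | hne
  · exact hasTightChainCover_empty
  obtain ⟨a, ha⟩ := hS.exists_maximal hne
  have hssub : S \ {a} ⊂ S := sdiff_singleton_ssubset.2 ha.prop
  obtain ⟨n, c, hc, htrans⟩ := of_ssubset _ hssub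
  have hcS : ∀ i, c i ⊆ S \ {a} := fun i p hp => hc.mem_iff.2 ⟨i, hp⟩
  obtain ⟨x, hx, hgreatest⟩ := exists_isGreatest_antichainTransversals hc.isChain
    (fun i => hS.subset ((hcS i).trans sdiff_subset)) htrans
  by_cases hbelow : ∃ i, x i ≤ a
  · obtain ⟨i, hi⟩ := hbelow
    set K := insert a (c i ∩ Iic (x i))
    have hmeet : ∀ z ∈ antichainTransversals c, ∃ j, z j ∈ K := fun z hz =>
      ⟨i, Or.inr ⟨hz.1 i, hgreatest hz i⟩⟩
    have hunion : K ∪ S \ {a} = S := by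
      rw [insert_union, union_eq_right.2 (inter_subset_left.trans (hcS i)),
        insert_sdiff_self_of_mem ha.prop]
    rw [← hunion]
    exact hc.hasTightChainCover_union htrans (isChain_insert_inter_Iic (hc.isChain i) hi) hmeet
      (of_ssubset _ (sdiff_subset.trans_ssubset hssub))
  · push Not at hbelow
    have hnotabove : ∀ i, ¬ a ≤ x i := fun i hai =>
      hbelow i (ha.le_of_ge (hcS i (hx.1 i)).1 hai)
    simpa only [insert_sdiff_self_of_mem ha.prop] using
      hc.hasTightChainCover_insert hx hnotabove hbelow

/-- A colouring whose colour classes are chains. Colours may be unused, so a colouring with `m`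
colours is a partition into at most `m` nonempty chains. -/
def IsChainColoring (f : P → κ) : Prop :=
  ∀ p q, f p = f q → p ≤ q ∨ q ≤ p

theorem IsChainColoring.injOn {f : P → κ} (hf : IsChainColoring f) {A : Set P}
    (hA : IsAntichain (· ≤ ·) A) : InjOn f A := fun p hp q hq hpq =>
  (hf p q hpq).elim (hA.eq hp hq) (hA.eq' hp hq)

theorem IsChainColoring.card_le [Fintype κ] {f : P → κ} (hf : IsChainColoring f) {A : Finset P}
    (hA : IsAntichain (· ≤ ·) (A : Set P)) : A.card ≤ Fintype.card κ :=
  Finset.card_le_card_of_injOn f (fun _ _ => Finset.mem_univ _) (hf.injOn hA)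

theorem IsChainCover.exists_isChainColoring (hc : IsChainCover S c) :
    ∃ f : S → ι, IsChainColoring f := by
  choose f hf using fun p : S => hc.mem_iff.1 p.2
  exact ⟨f, fun p q hpq => (hc.isChain (f p)).total (hf p) (hpq ▸ hf q)⟩

theorem exists_isChainColoring_of_finite (hS : S.Finite) {m : ℕ}
    (hcard : ∀ A : Finset P, (A : Set P) ⊆ S → IsAntichain (· ≤ ·) (A : Set P) → A.card ≤ m) :
    ∃ f : S → Fin m, IsChainColoring f := by
  obtain ⟨n, c, hc, x, hxc, hx⟩ := hasTightChainCover_of_finite hS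
  have hnm : n ≤ m := by
    have hxS : range x ⊆ S := range_subset_iff.2 fun i => hc.mem_iff.2 ⟨i, hxc i⟩
    simpa using hcard (Finset.univ.map ⟨x, hx.injective⟩) (by simpa using hxS)
      (by simpa using hx.isAntichain_range)
  obtain ⟨f, hf⟩ := hc.exists_isChainColoring
  exact ⟨Fin.castLE hnm ∘ f, fun p q hpq => hf p q (Fin.castLE_injective hnm hpq)⟩

theorem exists_isChainColoring_of_forall_finset [Finite κ]
    (h : ∀ s : Finset P, ∃ f : s → κ, IsChainColoring f) : ∃ f : P → κ, IsChainColoring f := by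
  classical
  choose g hg using h
  obtain ⟨f, hf⟩ := Finset.rado_selection_subtype (β := fun _ => κ) g
  refine ⟨f, fun p q hpq => ?_⟩
  obtain ⟨t, hst, hft⟩ := hf {p, q}
  have hp := hft ⟨p, by simp⟩
  have hq := hft ⟨q, by simp⟩
  exact hg t _ _ (hp.symm.trans (hpq.trans hq))

theorem exists_isChainColoring_iff {m : ℕ} :
    (∃ f : P → Fin m, IsChainColoring f) ↔
      ∀ a : Finset P, IsAntichain (· ≤ ·) (a : Set P) → a.card ≤ m := by
  refine ⟨fun ⟨f, hf⟩ a ha => by simpa using hf.card_le ha, fun h => ?_⟩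
  exact exists_isChainColoring_of_forall_finset fun s =>
    exists_isChainColoring_of_finite s.finite_toSet fun a _ => h a

end

theorem dilworth_general {P : Type*} [Preorder P] :
    (∀ m : ℕ,
      (∃ f : P → Fin m, IsChainColoring f) ↔
        ∀ a : Finset P, IsAntichain (· ≤ ·) (a : Set P) → a.card ≤ m) ∧
    (BddAbove {n : ℕ | ∃ a : Finset P, IsAntichain (· ≤ ·) (a : Set P) ∧ a.card = n} →
      IsLeast {m : ℕ | ∃ f : P → Fin m, IsChainColoring f}
        (sSup {n : ℕ | ∃ a : Finset P, IsAntichain (· ≤ ·) (a : Set P) ∧ a.card = n})) := by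
  refine ⟨fun m => exists_isChainColoring_iff, fun hbdd => ⟨?_, fun m hm => ?_⟩⟩
  · exact exists_isChainColoring_iff.2 fun a ha => le_csSup hbdd ⟨a, ha, rfl⟩
  · refine csSup_le ⟨0, ∅, by simp, rfl⟩ ?_
    rintro _ ⟨a, ha, rfl⟩
    exact exists_isChainColoring_iff.1 hm a ha

/-- Dilworth's theorem: a finite poset can be partitioned into `m` chains
(given by the fibers of a coloring `f : P → Fin m`) iff every antichain has
cardinality at most `m`; hence the minimum number of chains in a chain
partition equals the maximum cardinality of an antichain. -/
theorem dilworth {P : Type*} [Fintype P] [PartialOrder P] :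
    (∀ m : ℕ,
      (∃ f : P → Fin m, ∀ p q : P, f p = f q → p ≤ q ∨ q ≤ p) ↔
        ∀ a : Finset P, IsAntichain (· ≤ ·) (a : Set P) → a.card ≤ m) ∧
    IsLeast {m : ℕ | ∃ f : P → Fin m, ∀ p q : P, f p = f q → p ≤ q ∨ q ≤ p}
      (sSup {n : ℕ | ∃ a : Finset P, IsAntichain (· ≤ ·) (a : Set P) ∧ a.card = n}) :=
  ⟨dilworth_general.1, dilworth_general.2
    ⟨Fintype.card P, fun _ ⟨a, _, ha⟩ => ha ▸ Finset.card_le_univ a⟩⟩
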